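/- Let a_1, a_2, b, c be real numbers with c > b > 0, and let x ∈ (0,1). Then sgn(D_b (F(a_1,b,c,x) / F(a_2,b,c,x))) = sgn(a_1 − a_2), where D_b denotes the derivative with respect to the parameter b of the ratio of the two hypergeometric functions. -/

import Mathlib

/-- The rising factorial (Pochhammer symbol): `(y)_j = y(y+1)⋯(y+j-1)`, `(y)_0 = 1`. -/
noncomputable def risingFactorial (y : ℝ) : ℕ → ℝ
  | 0 => 1
  | m + 1 => risingFactorial y m * (y + m)

/-- The Gaussian hypergeometric function
`F(a,b,c,x) = ∑_{j≥0} (a)_j (b)_j / ((c)_j j!) xʲ`. -/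
noncomputable def hypF (a b c x : ℝ) : ℝ :=
  ∑' j : ℕ, risingFactorial a j * risingFactorial b j /
    (risingFactorial c j * (Nat.factorial j : ℝ)) * x ^ j

/-!
By Euler's integral, `B(b, c - b) F(a, b, c, x) = ∫₀¹ (1 - xt)^(-a) t^(b-1) (1-t)^(c-b-1) dt`, and
the beta factor cancels in the ratio. The integrand depends on `b` only through `exp (b logit t)`,
so `D_b` inserts a factor `logit t` under the integral, and the derivative of the ratio has the sign
of `∫ logit · K₁ ∫ K₂ - ∫ K₁ ∫ logit · K₂`, where `K₁`, `K₂` are the two integrands. As `logit` is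
increasing and `K₁ / K₂ = (1 - xt)^(a₂-a₁)` is monotone, in the direction given by the sign of
`(a₁ - a₂) x`, Chebyshev's integral inequality (proved by symmetrizing over pairs of points)
determines that sign.
-/

open MeasureTheory ProbabilityTheory Set Filter Topology

section RisingFactorial

lemma risingFactorial_eq_ascPochhammer_eval (y : ℝ) (n : ℕ) :
    risingFactorial y n = (ascPochhammer ℝ n).eval y := by
  induction n with
  | zero => simp [risingFactorial]
  | succ n ih => rw [risingFactorial, ih, ascPochhammer_succ_eval]

lemma risingFactorial_pos {y : ℝ} (hy : 0 < y) (n : ℕ) : 0 < risingFactorial y n := by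
  rw [risingFactorial_eq_ascPochhammer_eval]
  exact ascPochhammer_pos n y hy

lemma choose_add_sub_one_eq_risingFactorial_div_factorial (a : ℝ) (n : ℕ) :
    Ring.choose (a + n - 1) n = risingFactorial a n / n.factorial := by
  have h := Ring.factorial_nsmul_multichoose_eq_ascPochhammer a n
  rw [Polynomial.ascPochhammer_smeval_eq_eval, ← risingFactorial_eq_ascPochhammer_eval,
    nsmul_eq_mul] at h
  rw [← Ring.multichoose_eq, eq_div_iff (by positivity), mul_comm, h]

theorem hasSum_risingFactorial_div_factorial_mul_pow (a : ℝ) {y : ℝ} (hy : |y| < 1) :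
    HasSum (fun n : ℕ => risingFactorial a n / n.factorial * y ^ n) ((1 - y) ^ (-a)) := by
  have h := (Real.one_div_one_sub_rpow_hasFPowerSeriesOnBall_zero a).hasSum (y := y)
    (by simpa [Metric.mem_eball, edist_dist, Real.dist_eq] using hy)
  have hy_nonneg : 0 ≤ 1 - y := by linarith [(abs_lt.1 hy).2]
  rw [Real.rpow_neg hy_nonneg, ← one_div]
  simpa only [FormalMultilinearSeries.ofScalars_apply_eq, zero_add, smul_eq_mul,
    choose_add_sub_one_eq_risingFactorial_div_factorial] using h

theorem hasSum_integral_pow_mul {μ : Measure ℝ} {w : ℝ → ℝ} (a : ℝ) {x : ℝ} (hx : |x| < 1)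
    (hμ : ∀ᵐ t ∂μ, |t| ≤ 1) (hw : Integrable w μ) :
    HasSum (fun n : ℕ => risingFactorial a n / n.factorial * x ^ n * ∫ t, t ^ n * w t ∂μ)
      (∫ t, (1 - x * t) ^ (-a) * w t ∂μ) := by
  let coeff : ℕ → ℝ := fun n => risingFactorial a n / n.factorial * x ^ n
  have hcoeff_summable : Summable fun n => |coeff n| :=
    (hasSum_risingFactorial_div_factorial_mul_pow a hx).summable.abs
  simp only [← integral_const_mul]
  refine hasSum_integral_of_dominated_convergence (fun n t => |coeff n| * ‖w t‖)
    (fun n => ?_) (fun n => ?_) ?_ ?_ ?_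
  · exact ((measurable_id.pow_const n).aestronglyMeasurable.mul hw.aestronglyMeasurable).const_mul
      (coeff n)
  · filter_upwards [hμ] with t ht
    have htn : ‖t ^ n‖ ≤ 1 := by
      rw [norm_pow]
      exact pow_le_one₀ (norm_nonneg t) ht
    rw [norm_mul, norm_mul (t ^ n)]
    exact mul_le_mul_of_nonneg_left (mul_le_of_le_one_left (norm_nonneg (w t)) htn)
      (abs_nonneg (coeff n))
  · exact ae_of_all _ fun t => hcoeff_summable.mul_right _
  · simpa only [tsum_mul_right] using hw.norm.const_mul _
  · filter_upwards [hμ] with t ht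
    have hxt : |x * t| < 1 := by
      rw [abs_mul]
      exact (mul_le_of_le_one_right (abs_nonneg x) ht).trans_lt hx
    refine ((hasSum_risingFactorial_div_factorial_mul_pow a hxt).mul_right (w t)).congr_fun
      fun n => ?_
    rw [mul_pow]
    ring

end RisingFactorial

section Beta

variable {u v : ℝ}

lemma ofReal_rpow_mul_one_sub_rpow {t : ℝ} (ht : t ∈ Icc (0 : ℝ) 1) (u v : ℝ) :
    ((t ^ (u - 1) * (1 - t) ^ (v - 1) : ℝ) : ℂ) =
      (t : ℂ) ^ ((u : ℂ) - 1) * (1 - (t : ℂ)) ^ ((v : ℂ) - 1) := by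
  rw [Complex.ofReal_mul, Complex.ofReal_cpow ht.1, Complex.ofReal_cpow (sub_nonneg.2 ht.2)]
  push_cast
  rfl

theorem integrableOn_rpow_mul_one_sub_rpow (hu : 0 < u) (hv : 0 < v) :
    IntegrableOn (fun t : ℝ => t ^ (u - 1) * (1 - t) ^ (v - 1)) (Ioo 0 1) := by
  have h := Complex.betaIntegral_convergent (u := u) (v := v) (by simpa) (by simpa)
  rw [intervalIntegrable_iff_integrableOn_Ioo_of_le zero_le_one] at h
  refine IntegrableOn.congr_fun h.re (fun t ht => ?_) measurableSet_Ioo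
  rw [← ofReal_rpow_mul_one_sub_rpow (Ioo_subset_Icc_self ht)]
  exact Complex.ofReal_re _

theorem setIntegral_rpow_mul_one_sub_rpow (hu : 0 < u) (hv : 0 < v) :
    ∫ t in Ioo (0 : ℝ) 1, t ^ (u - 1) * (1 - t) ^ (v - 1) = beta u v := by
  rw [beta_eq_betaIntegralReal u v hu hv, Complex.betaIntegral,
    intervalIntegral.integral_of_le zero_le_one, integral_Ioc_eq_integral_Ioo,
    ← setIntegral_congr_fun measurableSet_Ioo fun t ht =>
      ofReal_rpow_mul_one_sub_rpow (Ioo_subset_Icc_self ht) u v,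
    integral_complex_ofReal, Complex.ofReal_re]

lemma beta_add_one_left (hu : 0 < u) (hv : 0 < v) :
    beta (u + 1) v = beta u v * (u / (u + v)) := by
  have := Real.Gamma_pos_of_pos (add_pos hu hv)
  rw [beta, beta, add_right_comm, Real.Gamma_add_one hu.ne', Real.Gamma_add_one (by positivity)]
  field_simp

theorem beta_add_natCast_left (hu : 0 < u) (hv : 0 < v) (n : ℕ) :
    beta (u + n) v = beta u v * (risingFactorial u n / risingFactorial (u + v) n) := by
  induction n with
  | zero => simp [risingFactorial]
  | succ n ih =>
    rw [Nat.cast_succ, ← add_assoc, beta_add_one_left (by positivity) hv, ih, risingFactorial,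
      risingFactorial, mul_assoc, div_mul_div_comm, add_right_comm]

theorem setIntegral_pow_mul_rpow_mul_one_sub_rpow (hu : 0 < u) (hv : 0 < v) (n : ℕ) :
    ∫ t in Ioo (0 : ℝ) 1, t ^ n * (t ^ (u - 1) * (1 - t) ^ (v - 1)) =
      beta u v * (risingFactorial u n / risingFactorial (u + v) n) := by
  rw [← beta_add_natCast_left hu hv, ← setIntegral_rpow_mul_one_sub_rpow (by positivity) hv]
  refine setIntegral_congr_fun measurableSet_Ioo fun t ht => ?_
  rw [← mul_assoc, ← Real.rpow_natCast, ← Real.rpow_add ht.1]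
  ring_nf

end Beta

section EulerIntegral

/-- The integrand of Euler's integral for `F(a,b,c,x)`, without the factor `1 / B(b, c - b)`.
It is meant for `t ∈ (0, 1)`, where for `x < 1` the bases of all three powers are positive. -/
noncomputable def eulerKernel (a b c x t : ℝ) : ℝ :=
  (1 - x * t) ^ (-a) * (t ^ (b - 1) * (1 - t) ^ (c - b - 1))

/-- Euler's integral for `F(a,b,c,x)`, not normalised by `B(b, c - b)`. -/
noncomputable def eulerIntegral (a b c x : ℝ) : ℝ :=
  ∫ t in Ioo (0 : ℝ) 1, eulerKernel a b c x t

variable {a b c x : ℝ}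

lemma one_sub_mul_pos {t : ℝ} (hx : x < 1) (ht : t ∈ Icc (0 : ℝ) 1) : 0 < 1 - x * t := by
  rcases ht.1.eq_or_lt with rfl | ht_pos
  · simp
  · have : x * t < 1 * t := mul_lt_mul_of_pos_right hx ht_pos
    linarith [ht.2]

lemma eulerKernel_pos {t : ℝ} (hx : x < 1) (ht : t ∈ Ioo (0 : ℝ) 1) :
    0 < eulerKernel a b c x t :=
  mul_pos (Real.rpow_pos_of_pos (one_sub_mul_pos hx (Ioo_subset_Icc_self ht)) _)
    (mul_pos (Real.rpow_pos_of_pos ht.1 _) (Real.rpow_pos_of_pos (sub_pos.2 ht.2) _))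

lemma integrableOn_eulerKernel (hb : 0 < b) (hbc : b < c) (hx : x < 1) :
    IntegrableOn (eulerKernel a b c x) (Ioo 0 1) := by
  have hcont : ContinuousOn (fun t : ℝ => (1 - x * t) ^ (-a)) (Icc 0 1) :=
    ContinuousOn.rpow_const (by fun_prop) fun t ht => .inl (one_sub_mul_pos hx ht).ne'
  exact (integrableOn_rpow_mul_one_sub_rpow hb (sub_pos.2 hbc)).continuousOn_mul_of_subset
    hcont isCompact_Icc measurableSet_Ioo Ioo_subset_Icc_self

lemma eulerIntegral_pos (hb : 0 < b) (hbc : b < c) (hx : x < 1) : 0 < eulerIntegral a b c x := by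
  rw [eulerIntegral, ← integral_Ioc_eq_integral_Ioo, ← intervalIntegral.integral_of_le zero_le_one]
  refine intervalIntegral.intervalIntegral_pos_of_pos_on ?_ (fun t => eulerKernel_pos hx)
    zero_lt_one
  exact (intervalIntegrable_iff_integrableOn_Ioo_of_le zero_le_one).2
    (integrableOn_eulerKernel hb hbc hx)

theorem hypF_eq_eulerIntegral_div_beta (hb : 0 < b) (hbc : b < c) (hx : |x| < 1) :
    hypF a b c x = eulerIntegral a b c x / beta b (c - b) := by
  have hcb : 0 < c - b := sub_pos.2 hbc
  have hae : ∀ᵐ t ∂volume.restrict (Ioo (0 : ℝ) 1), |t| ≤ 1 :=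
    (ae_restrict_mem measurableSet_Ioo).mono fun t ht => by
      rw [abs_of_pos ht.1]; exact ht.2.le
  have hsum := hasSum_integral_pow_mul a hx hae (integrableOn_rpow_mul_one_sub_rpow hb hcb)
  rw [eq_div_iff (beta_pos hb hcb).ne', hypF, ← tsum_mul_right]
  refine Eq.trans (tsum_congr fun n => ?_) hsum.tsum_eq
  rw [setIntegral_pow_mul_rpow_mul_one_sub_rpow hb hcb, add_sub_cancel]
  have := risingFactorial_pos (hb.trans hbc) n
  field_simp

end EulerIntegral

section WeightedMGF

variable {α : Type*} [MeasurableSpace α] {μ : Measure α} {w X : α → ℝ} {b : ℝ}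

lemma toReal_ofReal_smul_ae_eq (hw_nonneg : 0 ≤ᵐ[μ] w) (f : α → ℝ) :
    (fun t => (ENNReal.ofReal (w t)).toReal • f t) =ᵐ[μ] fun t => w t * f t := by
  filter_upwards [hw_nonneg] with t ht
  rw [ENNReal.toReal_ofReal ht, smul_eq_mul]

lemma integral_withDensity_ofReal (hw : Measurable w) (hw_nonneg : 0 ≤ᵐ[μ] w) (f : α → ℝ) :
    ∫ t, f t ∂μ.withDensity (fun t => ENNReal.ofReal (w t)) = ∫ t, w t * f t ∂μ := by
  rw [integral_withDensity_eq_integral_toReal_smul hw.ennreal_ofReal (by simp)]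
  exact integral_congr_ae (toReal_ofReal_smul_ae_eq hw_nonneg f)

lemma integrable_withDensity_ofReal_iff (hw : Measurable w) (hw_nonneg : 0 ≤ᵐ[μ] w) {f : α → ℝ} :
    Integrable f (μ.withDensity fun t => ENNReal.ofReal (w t)) ↔
      Integrable (fun t => w t * f t) μ := by
  rw [integrable_withDensity_iff_integrable_smul' hw.ennreal_ofReal (by simp)]
  exact integrable_congr (toReal_ofReal_smul_ae_eq hw_nonneg f)

lemma mem_interior_integrableExpSet_withDensity (hw : Measurable w) (hw_nonneg : 0 ≤ᵐ[μ] w)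
    (hint : ∀ᶠ b' in 𝓝 b, Integrable (fun t => w t * Real.exp (b' * X t)) μ) :
    b ∈ interior (integrableExpSet X (μ.withDensity fun t => ENNReal.ofReal (w t))) :=
  mem_interior_iff_mem_nhds.2 <|
    hint.mono fun _ h => (integrable_withDensity_ofReal_iff hw hw_nonneg).2 h

theorem integrable_mul_mul_exp (hw : Measurable w) (hw_nonneg : 0 ≤ᵐ[μ] w)
    (hint : ∀ᶠ b' in 𝓝 b, Integrable (fun t => w t * Real.exp (b' * X t)) μ) :
    Integrable (fun t => w t * (X t * Real.exp (b * X t))) μ := by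
  rw [← integrable_withDensity_ofReal_iff hw hw_nonneg]
  simpa only [pow_one] using integrable_pow_mul_exp_of_mem_interior_integrableExpSet
    (mem_interior_integrableExpSet_withDensity hw hw_nonneg hint) 1

theorem hasDerivAt_integral_mul_exp (hw : Measurable w) (hw_nonneg : 0 ≤ᵐ[μ] w)
    (hint : ∀ᶠ b' in 𝓝 b, Integrable (fun t => w t * Real.exp (b' * X t)) μ) :
    HasDerivAt (fun b' => ∫ t, w t * Real.exp (b' * X t) ∂μ)
      (∫ t, w t * (X t * Real.exp (b * X t)) ∂μ) b := by
  have h := hasDerivAt_mgf (mem_interior_integrableExpSet_withDensity hw hw_nonneg hint)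
  rw [integral_withDensity_ofReal hw hw_nonneg] at h
  exact h.congr_of_eventuallyEq <|
    .of_forall fun _ => (integral_withDensity_ofReal hw hw_nonneg _).symm

end WeightedMGF

section ChebyshevInequality

lemma sub_mul_sub_eq_sub_sub_sub {α : Type*} (f p q : α → ℝ) :
    (fun z : α × α => (f z.1 - f z.2) * (p z.1 * q z.2 - p z.2 * q z.1)) =
      ((fun z => f z.1 * p z.1 * q z.2) - fun z => p z.1 * (f z.2 * q z.2)) -
        ((fun z => f z.1 * q z.1 * p z.2) - fun z => q z.1 * (f z.2 * p z.2)) := by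
  ext z
  simp only [Pi.sub_apply]
  ring

variable {α : Type*} [MeasurableSpace α] {μ : Measure α}

lemma integral_pos_of_ae_pos (hμ : μ ≠ 0) {f : α → ℝ} (hf : Integrable f μ)
    (hpos : ∀ᵐ t ∂μ, 0 < f t) : 0 < ∫ t, f t ∂μ := by
  rw [integral_pos_iff_support_of_nonneg_ae (hpos.mono fun _ => le_of_lt) hf]
  have hsupport : Function.support f =ᵐ[μ] univ :=
    eventuallyEq_univ.2 (hpos.mono fun _ ht => ht.ne')
  rw [measure_congr hsupport]
  exact Measure.measure_univ_pos.2 hμ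

lemma ae_prod_ne [MeasurableEq α] [SFinite μ] [NullSingletonClass μ] :
    ∀ᵐ z ∂μ.prod μ, z.1 ≠ z.2 := by
  have hdiag : μ.prod μ (diagonal α) = 0 :=
    (Measure.measure_prod_null measurableSet_diagonal).2 <| .of_forall fun t => by
      have : Prod.mk t ⁻¹' diagonal α = {t} := by ext; simp [eq_comm]
      simp [this]
  exact measure_eq_zero_iff_ae_notMem.1 hdiag

lemma integrable_prod_sub_mul_sub {f p q : α → ℝ} (hp : Integrable p μ)
    (hq : Integrable q μ)
    (hfp : Integrable (fun t => f t * p t) μ) (hfq : Integrable (fun t => f t * q t) μ) :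
    Integrable (fun z : α × α => (f z.1 - f z.2) * (p z.1 * q z.2 - p z.2 * q z.1))
      (μ.prod μ) := by
  rw [sub_mul_sub_eq_sub_sub_sub]
  exact ((hfp.mul_prod hq).sub (hp.mul_prod hfq)).sub ((hfq.mul_prod hp).sub (hq.mul_prod hfp))

lemma integral_prod_sub_mul_sub [SFinite μ] {f p q : α → ℝ} (hp : Integrable p μ)
    (hq : Integrable q μ)
    (hfp : Integrable (fun t => f t * p t) μ) (hfq : Integrable (fun t => f t * q t) μ) :
    ∫ z : α × α, (f z.1 - f z.2) * (p z.1 * q z.2 - p z.2 * q z.1) ∂μ.prod μ =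
      2 * ((∫ t, f t * p t ∂μ) * (∫ t, q t ∂μ) - (∫ t, p t ∂μ) * ∫ t, f t * q t ∂μ) := by
  rw [sub_mul_sub_eq_sub_sub_sub,
    integral_sub' ((hfp.mul_prod hq).sub (hp.mul_prod hfq))
      ((hfq.mul_prod hp).sub (hq.mul_prod hfp)),
    integral_sub' (hfp.mul_prod hq) (hp.mul_prod hfq),
    integral_sub' (hfq.mul_prod hp) (hq.mul_prod hfp),
    integral_prod_mul (fun t => f t * p t) q, integral_prod_mul p (fun t => f t * q t),
    integral_prod_mul (fun t => f t * q t) p, integral_prod_mul q (fun t => f t * p t)]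
  ring

/-- Strict Chebyshev integral inequality: `hpq` is monotonicity of `p / q` with denominators
cleared. -/
theorem integral_mul_integral_lt_of_strictMonoOn [LinearOrder α] [MeasurableEq α] [SFinite μ]
    [NullSingletonClass μ] [NeZero μ] {s : Set α} {f p q : α → ℝ} (hs : ∀ᵐ t ∂μ, t ∈ s)
    (hf : StrictMonoOn f s) (hpq : ∀ u ∈ s, ∀ v ∈ s, u < v → p u * q v < p v * q u)
    (hp_int : Integrable p μ) (hq_int : Integrable q μ)
    (hfp_int : Integrable (fun t => f t * p t) μ) (hfq_int : Integrable (fun t => f t * q t) μ) :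
    (∫ t, p t ∂μ) * (∫ t, f t * q t ∂μ) < (∫ t, f t * p t ∂μ) * ∫ t, q t ∂μ := by
  have hpos : ∀ᵐ z ∂μ.prod μ, 0 < (f z.1 - f z.2) * (p z.1 * q z.2 - p z.2 * q z.1) := by
    filter_upwards [ae_prod_ne, Measure.quasiMeasurePreserving_fst.ae hs,
      Measure.quasiMeasurePreserving_snd.ae hs] with z hne h₁ h₂
    rcases hne.lt_or_gt with hlt | hgt
    · exact mul_pos_of_neg_of_neg (sub_neg.2 (hf h₁ h₂ hlt)) (sub_neg.2 (hpq _ h₁ _ h₂ hlt))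
    · exact mul_pos (sub_pos.2 (hf h₂ h₁ hgt)) (sub_pos.2 (hpq _ h₂ _ h₁ hgt))
  have hprod_ne_zero : μ.prod μ ≠ 0 := by
    rw [ne_eq, ← Measure.measure_univ_eq_zero, ← univ_prod_univ, Measure.prod_prod]
    simp [NeZero.ne μ]
  have h := integral_pos_of_ae_pos hprod_ne_zero
    (integrable_prod_sub_mul_sub hp_int hq_int hfp_int hfq_int) hpos
  rw [integral_prod_sub_mul_sub hp_int hq_int hfp_int hfq_int] at h
  linarith

end ChebyshevInequality

section Logit

/-- The log-odds function: the variable conjugate to `b` in Euler's integral. Meant for `(0, 1)`. -/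
noncomputable def logit (t : ℝ) : ℝ := Real.log t - Real.log (1 - t)

/-- The derivative of Euler's integral with respect to `b`. -/
noncomputable def logitEulerIntegral (a b c x : ℝ) : ℝ :=
  ∫ t in Ioo (0 : ℝ) 1, logit t * eulerKernel a b c x t

lemma logit_strictMonoOn : StrictMonoOn logit (Ioo 0 1) := fun _ hs _ ht hst =>
  sub_lt_sub (Real.log_lt_log hs.1 hst)
    (Real.log_lt_log (sub_pos.2 ht.2) (sub_lt_sub_left hst 1))

lemma eulerKernel_zero_mul_exp_logit (a b c x : ℝ) {t : ℝ} (ht : t ∈ Ioo (0 : ℝ) 1) :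
    eulerKernel a 0 c x t * Real.exp (b * logit t) = eulerKernel a b c x t := by
  have ht' : 0 < 1 - t := sub_pos.2 ht.2
  have hexp : Real.exp (b * logit t) = t ^ b * (1 - t) ^ (-b) := by
    rw [Real.rpow_def_of_pos ht.1, Real.rpow_def_of_pos ht', ← Real.exp_add, logit]
    ring_nf
  rw [hexp, eulerKernel, eulerKernel, show b - 1 = 0 - 1 + b by ring,
    show c - b - 1 = c - 0 - 1 + -b by ring, Real.rpow_add ht.1, Real.rpow_add ht']
  ring

lemma eulerKernel_zero_mul_logit_mul_exp_logit (a b c x : ℝ) {t : ℝ} (ht : t ∈ Ioo (0 : ℝ) 1) :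
    eulerKernel a 0 c x t * (logit t * Real.exp (b * logit t)) =
      logit t * eulerKernel a b c x t := by
  rw [mul_left_comm, eulerKernel_zero_mul_exp_logit a b c x ht]

lemma measurable_eulerKernel (a b c x : ℝ) : Measurable (eulerKernel a b c x) := by
  unfold eulerKernel
  fun_prop

variable {a b c x : ℝ}

lemma ae_nonneg_eulerKernel (hx : x < 1) :
    0 ≤ᵐ[volume.restrict (Ioo (0 : ℝ) 1)] eulerKernel a b c x :=
  (ae_restrict_mem measurableSet_Ioo).mono fun _ ht => (eulerKernel_pos hx ht).le

lemma eventually_integrableOn_eulerKernel_zero_mul_exp (hb : 0 < b) (hbc : b < c) (hx : x < 1) :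
    ∀ᶠ b' in 𝓝 b,
      IntegrableOn (fun t => eulerKernel a 0 c x t * Real.exp (b' * logit t)) (Ioo 0 1) := by
  filter_upwards [Ioo_mem_nhds hb hbc] with b' hb'
  exact (integrableOn_eulerKernel hb'.1 hb'.2 hx).congr_fun
    (fun t ht => (eulerKernel_zero_mul_exp_logit a b' c x ht).symm) measurableSet_Ioo

lemma integrableOn_logit_mul_eulerKernel (hb : 0 < b) (hbc : b < c) (hx : x < 1) :
    IntegrableOn (fun t => logit t * eulerKernel a b c x t) (Ioo 0 1) :=
  IntegrableOn.congr_fun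
    (integrable_mul_mul_exp (measurable_eulerKernel a 0 c x) (ae_nonneg_eulerKernel hx)
      (eventually_integrableOn_eulerKernel_zero_mul_exp hb hbc hx))
    (fun _ ht => eulerKernel_zero_mul_logit_mul_exp_logit a b c x ht) measurableSet_Ioo

theorem hasDerivAt_eulerIntegral (hb : 0 < b) (hbc : b < c) (hx : x < 1) :
    HasDerivAt (fun b' => eulerIntegral a b' c x) (logitEulerIntegral a b c x) b := by
  have h := hasDerivAt_integral_mul_exp (measurable_eulerKernel a 0 c x)
    (ae_nonneg_eulerKernel hx) (eventually_integrableOn_eulerKernel_zero_mul_exp hb hbc hx)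
  rw [setIntegral_congr_fun measurableSet_Ioo fun _ ht =>
    eulerKernel_zero_mul_logit_mul_exp_logit a b c x ht] at h
  exact h.congr_of_eventuallyEq <| .of_forall fun b' =>
    setIntegral_congr_fun measurableSet_Ioo fun _ ht =>
      (eulerKernel_zero_mul_exp_logit a b' c x ht).symm

end Logit

section SignOfDerivative

variable {a₁ a₂ b c x : ℝ}

lemma strictMonoOn_one_sub_mul_rpow {r : ℝ} (hx : x < 1) (hrx : r * x < 0) :
    StrictMonoOn (fun t : ℝ => (1 - x * t) ^ r) (Icc 0 1) := by
  intro u hu v hv huv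
  rcases mul_neg_iff.1 hrx with ⟨hr, hx_neg⟩ | ⟨hr, hx_pos⟩
  · exact Real.rpow_lt_rpow (one_sub_mul_pos hx hu).le
      (sub_lt_sub_left (mul_lt_mul_of_neg_left huv hx_neg) 1) hr
  · exact Real.rpow_lt_rpow_of_neg (one_sub_mul_pos hx hv)
      (sub_lt_sub_left (mul_lt_mul_of_pos_left huv hx_pos) 1) hr

lemma eulerKernel_eq_rpow_mul_eulerKernel (a₁ a₂ b c : ℝ) {t : ℝ} (hx : x < 1)
    (ht : t ∈ Icc (0 : ℝ) 1) :
    eulerKernel a₁ b c x t = (1 - x * t) ^ (a₂ - a₁) * eulerKernel a₂ b c x t := by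
  rw [eulerKernel, eulerKernel, ← mul_assoc (_ ^ (a₂ - a₁)),
    ← Real.rpow_add (one_sub_mul_pos hx ht)]
  ring_nf

lemma eulerKernel_mul_eulerKernel_lt {u v : ℝ} (hx : x < 1) (hax : 0 < (a₁ - a₂) * x)
    (hu : u ∈ Ioo (0 : ℝ) 1) (hv : v ∈ Ioo (0 : ℝ) 1) (huv : u < v) :
    eulerKernel a₁ b c x u * eulerKernel a₂ b c x v <
      eulerKernel a₁ b c x v * eulerKernel a₂ b c x u := by
  have hu' := Ioo_subset_Icc_self hu
  have hv' := Ioo_subset_Icc_self hv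
  have hratio : (1 - x * u) ^ (a₂ - a₁) < (1 - x * v) ^ (a₂ - a₁) :=
    strictMonoOn_one_sub_mul_rpow hx (by linarith) hu' hv' huv
  rw [eulerKernel_eq_rpow_mul_eulerKernel a₁ a₂ b c hx hu',
    eulerKernel_eq_rpow_mul_eulerKernel a₁ a₂ b c hx hv', mul_assoc, mul_assoc,
    mul_comm (eulerKernel a₂ b c x v)]
  exact mul_lt_mul_of_pos_right hratio (mul_pos (eulerKernel_pos hx hu) (eulerKernel_pos hx hv))

theorem eulerIntegral_mul_logitEulerIntegral_lt (hb : 0 < b) (hbc : b < c) (hx : x < 1)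
    (hax : 0 < (a₁ - a₂) * x) :
    eulerIntegral a₁ b c x * logitEulerIntegral a₂ b c x <
      logitEulerIntegral a₁ b c x * eulerIntegral a₂ b c x := by
  have : NeZero (volume.restrict (Ioo (0 : ℝ) 1)) := ⟨by simp⟩
  exact integral_mul_integral_lt_of_strictMonoOn (ae_restrict_mem measurableSet_Ioo)
    logit_strictMonoOn (fun _ hu _ hv => eulerKernel_mul_eulerKernel_lt hx hax hu hv)
    (integrableOn_eulerKernel hb hbc hx) (integrableOn_eulerKernel hb hbc hx)
    (integrableOn_logit_mul_eulerKernel hb hbc hx) (integrableOn_logit_mul_eulerKernel hb hbc hx)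

lemma eulerKernel_eq_of_mul_eq_zero (b c : ℝ) (hax : (a₁ - a₂) * x = 0) :
    eulerKernel a₁ b c x = eulerKernel a₂ b c x := by
  rcases mul_eq_zero.1 hax with ha | rfl
  · rw [sub_eq_zero.1 ha]
  · ext t
    simp [eulerKernel]

theorem sign_logitEulerIntegral_mul_eulerIntegral_sub (hb : 0 < b) (hbc : b < c) (hx : x < 1) :
    Real.sign (logitEulerIntegral a₁ b c x * eulerIntegral a₂ b c x -
      eulerIntegral a₁ b c x * logitEulerIntegral a₂ b c x) = Real.sign ((a₁ - a₂) * x) := by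
  rcases lt_trichotomy ((a₁ - a₂) * x) 0 with hneg | hzero | hpos
  · have h := eulerIntegral_mul_logitEulerIntegral_lt (a₁ := a₂) (a₂ := a₁) hb hbc hx
      (by linarith)
    rw [Real.sign_of_neg hneg, Real.sign_of_neg (by linarith)]
  · have hkernel := eulerKernel_eq_of_mul_eq_zero b c hzero
    rw [hzero, logitEulerIntegral, logitEulerIntegral, eulerIntegral, eulerIntegral, hkernel,
      mul_comm, sub_self]
  · rw [Real.sign_of_pos hpos, Real.sign_of_pos
      (sub_pos.2 (eulerIntegral_mul_logitEulerIntegral_lt hb hbc hx hpos))]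

theorem hasDerivAt_hypF_div_hypF (hb : 0 < b) (hbc : b < c) (hx : |x| < 1) :
    HasDerivAt (fun b' => hypF a₁ b' c x / hypF a₂ b' c x)
      ((logitEulerIntegral a₁ b c x * eulerIntegral a₂ b c x -
        eulerIntegral a₁ b c x * logitEulerIntegral a₂ b c x) / eulerIntegral a₂ b c x ^ 2) b := by
  have hx_lt : x < 1 := (abs_lt.1 hx).2
  refine ((hasDerivAt_eulerIntegral hb hbc hx_lt).fun_div (hasDerivAt_eulerIntegral hb hbc hx_lt)
    (eulerIntegral_pos hb hbc hx_lt).ne').congr_of_eventuallyEq ?_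
  filter_upwards [Ioo_mem_nhds hb hbc] with b' hb'
  rw [hypF_eq_eulerIntegral_div_beta hb'.1 hb'.2 hx, hypF_eq_eulerIntegral_div_beta hb'.1 hb'.2 hx,
    div_div_div_cancel_right₀ (beta_pos hb'.1 (sub_pos.2 hb'.2)).ne']

lemma real_sign_mul_of_pos_right (r : ℝ) {s : ℝ} (hs : 0 < s) :
    Real.sign (r * s) = Real.sign r := by
  rcases lt_trichotomy r 0 with hr | rfl | hr
  · rw [Real.sign_of_neg hr, Real.sign_of_neg (mul_neg_of_neg_of_pos hr hs)]
  · rw [zero_mul]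
  · rw [Real.sign_of_pos hr, Real.sign_of_pos (mul_pos hr hs)]

theorem stmt12_general (a₁ a₂ : ℝ) (hb : 0 < b) (hbc : b < c) (hx : |x| < 1) :
    Real.sign (deriv (fun b' : ℝ => hypF a₁ b' c x / hypF a₂ b' c x) b) =
      Real.sign ((a₁ - a₂) * x) := by
  have hx_lt : x < 1 := (abs_lt.1 hx).2
  have hpos : 0 < (eulerIntegral a₂ b c x ^ 2)⁻¹ := by
    have := eulerIntegral_pos (a := a₂) hb hbc hx_lt
    positivity
  rw [(hasDerivAt_hypF_div_hypF hb hbc hx).deriv, div_eq_mul_inv,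
    real_sign_mul_of_pos_right _ hpos,
    sign_logitEulerIntegral_mul_eulerIntegral_sub hb hbc hx_lt]

end SignOfDerivative

/-- For `c > b > 0` and `0 < x < 1`,
`sgn(D_b (F(a₁,b,c,x)/F(a₂,b,c,x))) = sgn(a₁ - a₂)`. -/
theorem stmt12 (a₁ a₂ b c x : ℝ) (hb : 0 < b) (hbc : b < c)
    (hx : x ∈ Set.Ioo (0 : ℝ) 1) :
    Real.sign (deriv (fun b' : ℝ => hypF a₁ b' c x / hypF a₂ b' c x) b) =
      Real.sign (a₁ - a₂) := by
  rw [stmt12_general a₁ a₂ hb hbc (abs_lt.2 ⟨by linarith [hx.1], hx.2⟩),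
    real_sign_mul_of_pos_right _ hx.1]
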